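/- For every unicyclic graph G on n vertices that is not a cycle-star graph, there exists a cycle-star graph G′ on n vertices with H_A(G) < H_A(G′). -/

import Mathlib

open Finset SimpleGraph

/-- Degree of a vertex (number of neighbors). -/
noncomputable def deg {V : Type*} [Fintype V] (G : SimpleGraph V) (v : V) : ℕ :=
  Nat.card {w // G.Adj v w}

open scoped Classical in
/-- Additively weighted Harary index: sum over unordered pairs of distinct
vertices of (deg u + deg v) / d(u,v). -/
noncomputable def HA {V : Type*} [Fintype V] (G : SimpleGraph V) : ℝ :=
  (1/2) * ∑ u : V, ∑ v : V, if u = v then 0 else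
    ((deg G u + deg G v : ℕ) : ℝ) / (G.dist u v)

/-- A unicyclic graph: connected with as many edges as vertices. -/
def Unicyclic {V : Type*} [Fintype V] (G : SimpleGraph V) : Prop :=
  G.Connected ∧ Nat.card G.edgeSet = Fintype.card V

/-- k-th harmonicNum number. -/
noncomputable def harmonicNum (k : ℕ) : ℝ := ∑ i ∈ Finset.range k, (1 : ℝ) / (i + 1)

/-- CS_{3,n-3}: a triangle on vertices 0,1,2 with n-3 leaves attached to vertex 0. -/
def cycleStar3 (n : ℕ) : SimpleGraph (Fin n) :=
  SimpleGraph.fromRel (fun i j => ((i : ℕ) < 3 ∧ (j : ℕ) < 3) ∨ ((i : ℕ) = 0 ∧ 3 ≤ (j : ℕ)))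

/-- CP_{k,n-k}: cycle 0,...,k-1 with the path k,k+1,...,n-1 attached to vertex 0
(for k = n this is just the cycle C_n). -/
def cyclePath (n k : ℕ) : SimpleGraph (Fin n) :=
  SimpleGraph.fromRel (fun i j =>
    ((i : ℕ) < k ∧ (j : ℕ) < k ∧ ((j : ℕ) = (i : ℕ) + 1 ∨ ((i : ℕ) = 0 ∧ (j : ℕ) = k - 1)))
    ∨ ((i : ℕ) = 0 ∧ (j : ℕ) = k)
    ∨ (k ≤ (i : ℕ) ∧ (j : ℕ) = (i : ℕ) + 1))

/-- A vertex lies on a cycle of G. -/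
def OnCycle {V : Type*} (G : SimpleGraph V) (v : V) : Prop :=
  ∃ p : G.Walk v v, p.IsCycle

/-- Cycle-star graph: unicyclic, and every vertex of degree ≥ 2 lies on the cycle
(equivalently, every non-cycle vertex is a leaf attached to a cycle vertex). -/
def IsCycleStar {V : Type*} [Fintype V] (G : SimpleGraph V) : Prop :=
  Unicyclic G ∧ ∀ v, 2 ≤ deg G v → OnCycle G v

/-- Cycle-path graph: unicyclic, cycle vertices have degree ≤ 3 and non-cycle
vertices have degree ≤ 2 (at most one pendant path per cycle vertex). -/
def IsCyclePath {V : Type*} [Fintype V] (G : SimpleGraph V) : Prop :=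
  Unicyclic G ∧ ∀ v, (OnCycle G v → deg G v ≤ 3) ∧ (¬ OnCycle G v → deg G v ≤ 2)

/-- Length of the unique cycle of a unicyclic graph: number of vertices on a cycle. -/
noncomputable def cycleLength {V : Type*} [Fintype V] (G : SimpleGraph V) : ℕ :=
  Nat.card {v // OnCycle G v}

/-- Value of H_A(CP_{3,n-3}). -/
noncomputable def CPval (n : ℕ) : ℝ :=
  4 * ∑ i ∈ Finset.range (n - 2), harmonicNum (n - i - 2)
    + harmonicNum (n - 3) + 3 * harmonicNum (n - 2) + (6 * (n : ℝ) - 13) / ((n : ℝ) - 2)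

lemma deg_eq {V : Type*} [Fintype V] [DecidableEq V] (G : SimpleGraph V) [DecidableRel G.Adj]
    (v : V) : deg G v = G.degree v := by
  unfold deg
  rw [Nat.card_eq_fintype_card, ← G.card_neighborSet_eq_degree]
  exact Fintype.card_congr (Equiv.refl _)

lemma onCycle_triangle {V : Type*} (G : SimpleGraph V) {a b c : V} (h1 : G.Adj a b)
    (h2 : G.Adj b c) (h3 : G.Adj c a) : OnCycle G a := by
  refine ⟨Walk.cons h1 (Walk.cons h2 (Walk.cons h3 Walk.nil)), ?_⟩
  have := h1.ne
  have := h2.ne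
  have := h3.ne
  rw [Walk.cons_isCycle_iff]
  simp [Walk.isPath_def]
  grind

lemma sum_deg {n : ℕ} (G : SimpleGraph (Fin n)) :
    ∑ v, deg G v = 2 * Nat.card G.edgeSet := by
  classical
  simp_rw [deg_eq]
  rw [G.sum_degrees_eq_twice_card_edges, Nat.card_eq_fintype_card, ← edgeFinset_card]

lemma deg_add_le {n : ℕ} (G : SimpleGraph (Fin n)) (u v : Fin n) (huv : u ≠ v) :
    deg G u + deg G v ≤ Nat.card G.edgeSet + 1 := by
  classical
  rw [deg_eq, deg_eq, ← G.card_incidenceFinset_eq_degree u, ← G.card_incidenceFinset_eq_degree v,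
    Nat.card_eq_fintype_card, ← edgeFinset_card, ← Finset.card_union_add_card_inter]
  apply Nat.add_le_add
  · apply Finset.card_le_card
    apply Finset.union_subset <;> exact G.incidenceFinset_subset _
  · rw [← Finset.card_singleton (s(u, v))]
    apply Finset.card_le_card
    intro e he
    simp only [Finset.mem_inter, mem_incidenceFinset] at he
    have := G.incidenceSet_inter_incidenceSet_subset huv ⟨he.1, he.2⟩
    simpa using this

lemma isCycleStar_of_universal {n : ℕ} (G : SimpleGraph (Fin n)) (hG : Unicyclic G) (x : Fin n)
    (hx : ∀ v, v ≠ x → G.Adj x v) : IsCycleStar G := by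
  classical
  have key : ∀ v, v ≠ x → 2 ≤ deg G v → ∃ w, w ≠ x ∧ G.Adj v w := by
    intro v hv h2
    rw [deg_eq, ← G.card_neighborFinset_eq_degree] at h2
    obtain ⟨w, hw, hwx⟩ := Finset.exists_mem_ne (by omega : 1 < (G.neighborFinset v).card) x
    exact ⟨w, hwx, by simpa using hw⟩
  refine ⟨hG, fun v hv => ?_⟩
  by_cases hvx : v = x
  · subst hvx
    by_contra hcon
    have h1 : ∀ u ∈ Finset.univ.erase v, deg G u ≤ 1 := by
      intro u hu
      have hu := Finset.ne_of_mem_erase hu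
      by_contra hlt
      obtain ⟨w, hw, huw⟩ := key u hu (by omega)
      exact hcon (onCycle_triangle G (hx u hu) huw (hx w hw).symm)
    have h2 := Finset.sum_le_sum h1
    have h3 := sum_deg G
    rw [hG.2, ← Finset.add_sum_erase _ _ (Finset.mem_univ v)] at h3
    have h4 : deg G v < Fintype.card (Fin n) := by rw [deg_eq]; exact G.degree_lt_card_verts v
    simp [Finset.card_erase_of_mem] at h2 h3 h4
    omega
  · obtain ⟨w, hw, hvw⟩ := key v hvx hv
    exact onCycle_triangle G hvw (hx w hw).symm (hx v hvx)

/-- The comparison sum. -/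
lemma comparison {n : ℕ} (G : SimpleGraph (Fin n)) [DecidableRel G.Adj] :
    (∑ u, ∑ v, ((if u = v then 0 else (((deg G u + deg G v : ℕ) : ℝ) / 2)) +
      (if G.Adj u v then (((deg G u + deg G v : ℕ) : ℝ) / 2) else 0)))
      = ((n : ℝ) - 1) * (∑ u, (deg G u : ℝ)) + ∑ u, (deg G u : ℝ) ^ 2 := by
  classical
  have hA : ∀ u, ∑ v, (if G.Adj u v then (deg G u : ℝ) else 0) = (deg G u : ℝ) ^ 2 := by
    intro u
    rw [← Finset.sum_filter, Finset.sum_const, nsmul_eq_mul, deg_eq,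
      ← G.card_neighborFinset_eq_degree, neighborFinset_eq_filter, sq]
  have hB : ∑ u, ∑ v, (if G.Adj u v then (deg G v : ℝ) else 0) = ∑ u, (deg G u : ℝ) ^ 2 := by
    rw [Finset.sum_comm]
    refine Finset.sum_congr rfl fun u _ => ?_
    rw [← hA]
    simp_rw [G.adj_comm]
  have e : ∀ u v : Fin n, ((if u = v then 0 else (((deg G u + deg G v : ℕ) : ℝ) / 2)) +
      (if G.Adj u v then (((deg G u + deg G v : ℕ) : ℝ) / 2) else 0))
      = (deg G u : ℝ) / 2 + (deg G v : ℝ) / 2 - (if u = v then (deg G u : ℝ) else 0)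
        + (if G.Adj u v then (deg G u : ℝ) else 0) / 2
        + (if G.Adj u v then (deg G v : ℝ) else 0) / 2 := by
    intro u v
    by_cases h : u = v
    · subst h; simp
    · simp only [h, if_false]
      push_cast
      split_ifs <;> ring
  simp_rw [e, Finset.sum_add_distrib, Finset.sum_sub_distrib, Finset.sum_add_distrib,
    ← Finset.sum_div]
  rw [hB]
  simp_rw [hA]
  simp
  rw [← Finset.mul_sum]
  ring

lemma HA_le {n : ℕ} (G : SimpleGraph (Fin n)) (hc : G.Connected) :
    2 * HA G ≤ ((n : ℝ) - 1) * (∑ u, (deg G u : ℝ)) + ∑ u, (deg G u : ℝ) ^ 2 := by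
  classical
  rw [← comparison, HA, ← mul_assoc, mul_one_div_cancel two_ne_zero, one_mul]
  refine Finset.sum_le_sum fun u _ => Finset.sum_le_sum fun v _ => ?_
  by_cases h : u = v
  · subst h; simp
  · simp only [h, if_false]
    have hn : (0 : ℝ) ≤ ((deg G u + deg G v : ℕ) : ℝ) := Nat.cast_nonneg _
    by_cases ha : G.Adj u v
    · rw [if_pos ha, dist_eq_one_iff_adj.2 ha]; simp
    · rw [if_neg ha, add_zero]
      have h0 := hc.pos_dist_of_ne h
      have h1 : G.dist u v ≠ 1 := fun h => ha (dist_eq_one_iff_adj.1 h)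
      have : (2 : ℝ) ≤ (G.dist u v : ℝ) := by
        have : 2 ≤ G.dist u v := by omega
        exact_mod_cast this
      gcongr

lemma le_HA {n : ℕ} (G : SimpleGraph (Fin n)) (hc : G.Connected)
    (hd : ∀ u v, G.dist u v ≤ 2) :
    ((n : ℝ) - 1) * (∑ u, (deg G u : ℝ)) + ∑ u, (deg G u : ℝ) ^ 2 ≤ 2 * HA G := by
  classical
  rw [← comparison, HA, ← mul_assoc, mul_one_div_cancel two_ne_zero, one_mul]
  refine Finset.sum_le_sum fun u _ => Finset.sum_le_sum fun v _ => ?_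
  by_cases h : u = v
  · subst h; simp
  · simp only [h, if_false]
    have hn : (0 : ℝ) ≤ ((deg G u + deg G v : ℕ) : ℝ) := Nat.cast_nonneg _
    by_cases ha : G.Adj u v
    · rw [if_pos ha, dist_eq_one_iff_adj.2 ha]; simp
    · rw [if_neg ha, add_zero]
      have h0 := hc.pos_dist_of_ne h
      have : (G.dist u v : ℝ) ≤ 2 := by exact_mod_cast hd u v
      have : (0 : ℝ) < (G.dist u v : ℝ) := by exact_mod_cast h0
      gcongr

lemma sum_sq_lt {n : ℕ} (hn : 3 ≤ n) (d : Fin n → ℤ) (h1 : ∀ v, 1 ≤ d v)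
    (hs : ∑ v, d v = 2 * n) (hp : ∀ u v, u ≠ v → d u + d v ≤ n + 1)
    (hm : ∀ v, d v ≤ n - 2) : ∑ v, d v ^ 2 < (n : ℤ) ^ 2 - n + 6 := by
  obtain ⟨x, -, hx⟩ := Finset.exists_max_image Finset.univ d ⟨⟨0, by omega⟩, Finset.mem_univ _⟩
  have key : ∀ s : ℤ, (∀ v, v ≠ x → d v ≤ s + 1) →
      ∑ v, d v ^ 2 ≤ d x ^ 2 + ((s + 2) * (2 * n - d x) - (s + 1) * (n - 1)) := by
    intro s h
    have h2 : ∑ v ∈ Finset.univ.erase x, d v ^ 2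
        ≤ ∑ v ∈ Finset.univ.erase x, ((s + 2) * d v - (s + 1)) := by
      refine Finset.sum_le_sum fun v hv => ?_
      nlinarith [h1 v, h v (Finset.ne_of_mem_erase hv)]
    rw [Finset.sum_sub_distrib, ← Finset.mul_sum] at h2
    rw [← Finset.add_sum_erase _ _ (Finset.mem_univ x)] at hs ⊢
    have h3 : ∑ v ∈ Finset.univ.erase x, d v = 2 * n - d x := by linarith
    rw [h3] at h2
    simp only [Finset.sum_const, nsmul_eq_mul, Finset.card_erase_of_mem (Finset.mem_univ x),
      Finset.card_univ, Fintype.card_fin] at h2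
    rw [Nat.cast_sub (by omega)] at h2
    push_cast at h2
    linarith
  have hmx := hm x
  have hn' : (3 : ℤ) ≤ n := by exact_mod_cast hn
  generalize (n : ℤ) = N at *
  by_cases hc : 2 * (d x - 1) ≤ N - 1
  · have := key (d x - 1) (fun v _ => by linarith [hx v (Finset.mem_univ v)])
    rcases (by omega : N = 3 ∨ N = 4 ∨ 5 ≤ N) with rfl | rfl | h5
    · nlinarith [h1 x]
    · have : d x ≤ 2 := by omega
      nlinarith [h1 x]
    · nlinarith
  · have := key (N - d x) (fun v hv => by linarith [hp v x hv])
    have h2 : 0 < (N - 1 - d x) * (2 * d x - 5) := by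
      apply mul_pos <;> omega
    nlinarith

lemma cs3_adj {n : ℕ} (i j : Fin n) : (cycleStar3 n).Adj i j ↔ i ≠ j ∧
    (((i : ℕ) < 3 ∧ (j : ℕ) < 3) ∨ (i : ℕ) = 0 ∨ (j : ℕ) = 0) := by
  simp only [cycleStar3, fromRel_adj, ne_eq, Fin.ext_iff]
  omega

lemma cs3_deg {n : ℕ} (hn : 3 ≤ n) (i : Fin n) : deg (cycleStar3 n) i =
    if i = ⟨0, by omega⟩ then n - 1 else if i = ⟨1, by omega⟩ then 2
      else if i = ⟨2, by omega⟩ then 2 else 1 := by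
  classical
  rw [deg_eq, ← card_neighborFinset_eq_degree]
  split_ifs with h0 h1 h2
  · have : (cycleStar3 n).neighborFinset i = Finset.univ.erase i := by
      ext j
      simp only [mem_neighborFinset, cs3_adj, ne_eq, Finset.mem_erase, Finset.mem_univ, 
        and_true, Fin.ext_iff] at *
      omega
    rw [this, Finset.card_erase_of_mem (Finset.mem_univ _)]
    simp
  · have : (cycleStar3 n).neighborFinset i = {⟨0, by omega⟩, ⟨2, by omega⟩} := by
      ext j
      simp only [mem_neighborFinset, cs3_adj, ne_eq, Finset.mem_insert, Finset.mem_singleton,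
        Fin.ext_iff] at *
      omega
    rw [this, Finset.card_pair (by simp)]
  · have : (cycleStar3 n).neighborFinset i = {⟨0, by omega⟩, ⟨1, by omega⟩} := by
      ext j
      simp only [mem_neighborFinset, cs3_adj, ne_eq, Finset.mem_insert, Finset.mem_singleton,
        Fin.ext_iff] at *
      omega
    rw [this, Finset.card_pair (by simp)]
  · have : (cycleStar3 n).neighborFinset i = {⟨0, by omega⟩} := by
      ext j
      simp only [mem_neighborFinset, cs3_adj, ne_eq, Finset.mem_singleton, Fin.ext_iff] at *
      omega
    rw [this, Finset.card_singleton]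

lemma cs3_sum {n : ℕ} (hn : 3 ≤ n) (f : ℕ → ℤ) :
    ∑ i, f (deg (cycleStar3 n) i) = f (n - 1) + 2 * f 2 + (n - 3) * f 1 := by
  obtain ⟨k, rfl⟩ := Nat.exists_eq_add_of_le' hn
  simp_rw [cs3_deg hn]
  rw [Fin.sum_univ_succ, Fin.sum_univ_succ, Fin.sum_univ_succ]
  have h2 : 2 % (k + 3) = 2 := Nat.mod_eq_of_lt (by omega)
  simp [Fin.ext_iff, h2]
  ring

theorem stmt12 (n : ℕ) (G : SimpleGraph (Fin n)) (hG : Unicyclic G)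
    (h : ¬ IsCycleStar G) :
    ∃ G' : SimpleGraph (Fin n), IsCycleStar G' ∧ HA G < HA G' := by
  classical
  have hsum := sum_deg G
  rw [hG.2, Fintype.card_fin] at hsum
  have hlt : ∀ v, deg G v < n := fun v => by
    rw [deg_eq]; simpa using G.degree_lt_card_verts v
  have hn0 : 0 < n := by
    obtain ⟨x⟩ := hG.1.nonempty
    exact x.pos
  have hn : 3 ≤ n := by
    have h1 : ∑ v, deg G v ≤ ∑ v : Fin n, (n - 1) :=
      Finset.sum_le_sum fun v _ => by have := hlt v; omega
    rw [hsum] at h1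
    simp at h1
    have : 2 ≤ n - 1 := by
      rw [mul_comm] at h1
      exact Nat.le_of_mul_le_mul_left h1 hn0
    omega
  have hm : ∀ v, deg G v ≤ n - 2 := by
    intro x
    by_contra hcon
    refine h (isCycleStar_of_universal G hG x fun v hv => ?_)
    have h1 : deg G x = n - 1 := by have := hlt x; omega
    have h2 : G.neighborFinset x = Finset.univ.erase x := by
      apply Finset.eq_of_subset_of_card_le
      · intro w hw
        simp only [mem_neighborFinset] at hw
        simpa using hw.ne'
      · rw [card_neighborFinset_eq_degree, ← deg_eq, h1,
          Finset.card_erase_of_mem (Finset.mem_univ _)]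
        simp
    have : v ∈ G.neighborFinset x := by rw [h2]; simpa using hv
    simpa using this
  have hpos : ∀ v, 1 ≤ deg G v := by
    intro v
    have : Nontrivial (Fin n) := Fin.nontrivial_iff_two_le.2 (by omega)
    rw [deg_eq]
    exact hG.1.preconnected.degree_pos_of_nontrivial v
  have hsq := sum_sq_lt hn (fun v => (deg G v : ℤ)) (fun v => by exact_mod_cast hpos v)
    (by exact_mod_cast hsum)
    (fun u v huv => by
      have := deg_add_le G u v huv
      rw [hG.2, Fintype.card_fin] at this
      exact_mod_cast this)
    (fun v => by have := hm v; omega)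
  -- the target graph
  have huniv : ∀ v : Fin n, v ≠ ⟨0, hn0⟩ → (cycleStar3 n).Adj ⟨0, hn0⟩ v := by
    intro v hv
    rw [cs3_adj]
    exact ⟨hv.symm, Or.inr (Or.inl rfl)⟩
  have hreach : ∀ v : Fin n, (cycleStar3 n).Reachable ⟨0, hn0⟩ v := by
    intro v
    by_cases hv : v = ⟨0, hn0⟩
    · rw [hv]
    · exact (huniv v hv).reachable
  have hconn : (cycleStar3 n).Connected := by
    have : Nonempty (Fin n) := ⟨⟨0, hn0⟩⟩
    exact ⟨fun u v => (hreach u).symm.trans (hreach v)⟩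
  have hdist1 : ∀ v : Fin n, (cycleStar3 n).dist ⟨0, hn0⟩ v ≤ 1 := by
    intro v
    by_cases hv : v = ⟨0, hn0⟩
    · rw [hv]; simp
    · exact (dist_eq_one_iff_adj.2 (huniv v hv)).le
  have hdist : ∀ u v : Fin n, (cycleStar3 n).dist u v ≤ 2 := by
    intro u v
    have h1 := hconn.dist_triangle (u := u) (v := ⟨0, hn0⟩) (w := v)
    have h2 := hdist1 u
    have h3 := hdist1 v
    rw [dist_comm] at h2
    omega
  have hs1 := cs3_sum hn (fun k => (k : ℤ))
  have hs2 := cs3_sum hn (fun k => (k : ℤ) ^ 2)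
  simp only [Nat.cast_sub (by omega : 1 ≤ n)] at hs1 hs2
  push_cast at hs1 hs2
  have hs1' : ∑ i, (deg (cycleStar3 n) i : ℤ) = 2 * n := by rw [hs1]; ring
  have hs2' : ∑ i, (deg (cycleStar3 n) i : ℤ) ^ 2 = (n : ℤ) ^ 2 - n + 6 := by rw [hs2]; ring
  have huc : Unicyclic (cycleStar3 n) := by
    refine ⟨hconn, ?_⟩
    have h1 := sum_deg (cycleStar3 n)
    have h2 : ∑ i, deg (cycleStar3 n) i = 2 * n := by exact_mod_cast hs1'
    rw [Fintype.card_fin]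
    omega
  refine ⟨cycleStar3 n, isCycleStar_of_universal _ huc _ huniv, ?_⟩
  have hA := HA_le G hG.1
  have hB := le_HA (cycleStar3 n) hconn hdist
  have r1 : ∑ i, (deg (cycleStar3 n) i : ℝ) = 2 * n := by exact_mod_cast hs1'
  have r2 : ∑ i, (deg G i : ℝ) = 2 * n := by exact_mod_cast hsum
  have r3 : ∑ i, (deg G i : ℝ) ^ 2 < ∑ i, (deg (cycleStar3 n) i : ℝ) ^ 2 := by
    rw [← hs2'] at hsq
    exact_mod_cast hsq
  rw [r1] at hB
  rw [r2] at hA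
  linarith
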